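/- For α ∈ (0,1) and ξ > 0, the Laplace transform in t of the Mittag-Leffler function satisfies ∫₀^∞ e^{-λt} E_α(-ξ t^α) dt = λ^{α-1}/(λ^α + ξ) for all λ > 0. -/

import Mathlib

open MeasureTheory Real Set

/-- The one-parameter Mittag-Leffler function E_α(x) = Σ_{k≥0} x^k/Γ(αk+1). -/
noncomputable def mittagLeffler (α x : ℝ) : ℝ := ∑' k : ℕ, x ^ k / Real.Gamma (α * k + 1)

/-!
Put `F_β(t) = t ^ (β - 1) * E_{α,β}(c * t ^ α)`, so that `F_1(t) = E_α(c * t ^ α)`. Integrating the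
series term by term against the beta integral gives `I^a F_β = F_{a+β}` for the Riemann–Liouville
integral `I^a`. Splitting off the first term of the series turns this into the Volterra equation
`F_β = t ^ (β - 1) / Γ(β) + c * I^α F_β`, whose Laplace transform is `(λ ^ α - c) * L = λ ^ (α - β)`
as soon as `F_β` has a Laplace transform at `λ`.

Integrating the series of `E_α(-ξ * t ^ α)` term by term against `e ^ (-λ * t)` is legitimate only
for `λ ^ α > ξ`; integrability for every `λ > 0` comes from `0 ≤ E_α(-x) ≤ 1`. This bound is a
maximum principle: `I^{1-α} F_1' = c * F_1`, and `I^{1-α} φ'` is nonnegative wherever `φ` attains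
its running maximum, so with `c < 0` neither `F_1` nor `-F_1` has a positive maximum away from `0`.
-/

open Filter Topology

section GammaIntegrals

variable {a b s M T : ℝ}

lemma rpow_mul_exp_neg_le_Gamma (hs : 1 ≤ s) (hM : 0 ≤ M) :
    M ^ (s - 1) * exp (-M) ≤ Gamma s := by
  have hint := GammaIntegral_convergent (zero_lt_one.trans_le hs)
  have hsub : Ioi M ⊆ Ioi (0 : ℝ) := Ioi_subset_Ioi hM
  calc M ^ (s - 1) * exp (-M) = ∫ x in Ioi M, exp (-x) * M ^ (s - 1) := by
        rw [integral_mul_const, integral_exp_neg_Ioi, mul_comm]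
    _ ≤ ∫ x in Ioi M, exp (-x) * x ^ (s - 1) := by
        refine setIntegral_mono_on ((integrableOn_exp_neg_Ioi M).mul_const _)
          (hint.mono_set hsub) measurableSet_Ioi fun x hx ↦ ?_
        have hMx : M ≤ x := le_of_lt hx
        exact mul_le_mul_of_nonneg_left (rpow_le_rpow hM hMx (sub_nonneg.2 hs)) (exp_pos _).le
    _ ≤ ∫ x in Ioi 0, exp (-x) * x ^ (s - 1) := by
        refine setIntegral_mono_set hint ?_ (Eventually.of_forall hsub)
        filter_upwards [ae_restrict_mem measurableSet_Ioi] with x hx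
        exact mul_nonneg (exp_pos _).le (rpow_nonneg (le_of_lt hx) _)
    _ = Gamma s := (Gamma_eq_integral (zero_lt_one.trans_le hs)).symm

lemma integral_sub_rpow_mul_rpow (ha : 0 < a) (hb : 0 < b) (hT : 0 < T) :
    ∫ s in (0 : ℝ)..T, (T - s) ^ (a - 1) * s ^ (b - 1)
      = Gamma a * Gamma b / Gamma (a + b) * T ^ (a + b - 1) := by
  have hbeta := Complex.betaIntegral_scaled (b : ℂ) (a : ℂ) hT
  rw [Complex.betaIntegral_eq_Gamma_mul_div _ _ (by simpa) (by simpa), ← Complex.ofReal_add,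
    Complex.Gamma_ofReal, Complex.Gamma_ofReal, Complex.Gamma_ofReal] at hbeta
  have hright : ((Gamma a * Gamma b / Gamma (a + b) * T ^ (a + b - 1) : ℝ) : ℂ)
      = (T : ℂ) ^ (((b + a : ℝ) : ℂ) - 1) * (Gamma b * Gamma a / Gamma (b + a)) := by
    rw [add_comm a b]
    push_cast [Complex.ofReal_cpow hT.le]
    ring
  rw [← Complex.ofReal_inj, ← intervalIntegral.integral_ofReal, hright, ← hbeta]
  refine intervalIntegral.integral_congr fun s hs ↦ ?_
  rw [uIcc_of_le hT.le] at hs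
  push_cast [Complex.ofReal_cpow hs.1, Complex.ofReal_cpow (sub_nonneg.2 hs.2)]
  ring

lemma intervalIntegrable_sub_rpow_mul_rpow (ha : 0 < a) (hb : 0 < b) (hT : 0 < T) :
    IntervalIntegrable (fun s ↦ (T - s) ^ (a - 1) * s ^ (b - 1)) volume 0 T := by
  refine not_imp_comm.1 intervalIntegral.integral_undef ?_
  rw [integral_sub_rpow_mul_rpow ha hb hT]
  positivity

end GammaIntegrals

section FracIntegral

/-- The Riemann–Liouville fractional integral `I^a g` of order `a` based at `0`, evaluated at `t`.
It is meaningful for `0 < a` and `0 ≤ t`. -/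
noncomputable def fracIntegral (a : ℝ) (g : ℝ → ℝ) (t : ℝ) : ℝ :=
  (Gamma a)⁻¹ * ∫ s in (0 : ℝ)..t, (t - s) ^ (a - 1) * g s

variable {a : ℝ}

lemma fracIntegral_one (g : ℝ → ℝ) (t : ℝ) : fracIntegral 1 g t = ∫ s in (0 : ℝ)..t, g s := by
  simp [fracIntegral]

lemma fracIntegral_const_mul (c : ℝ) (g : ℝ → ℝ) (t : ℝ) :
    fracIntegral a (fun s ↦ c * g s) t = c * fracIntegral a g t := by
  simp only [fracIntegral, mul_left_comm _ c, intervalIntegral.integral_const_mul]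

lemma fracIntegral_congr {f g : ℝ → ℝ} {t : ℝ} (ht : 0 ≤ t) (h : EqOn f g (Ioo 0 t)) :
    fracIntegral a f t = fracIntegral a g t := by
  have hEqOn : EqOn (fun s ↦ (t - s) ^ (a - 1) * f s) (fun s ↦ (t - s) ^ (a - 1) * g s) (Ioo 0 t) :=
    fun s hs ↦ congrArg _ (h hs)
  rw [fracIntegral, fracIntegral, intervalIntegral.integral_congr_Ioo_of_le ht hEqOn]

lemma fracIntegral_tsum {b d : ℕ → ℝ} {T : ℝ} (ha : 0 < a) (hb : ∀ k, 0 < b k) (hT : 0 < T)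
    (hsum : Summable fun k ↦ |d k| * (T ^ (a + b k - 1) / Gamma (a + b k))) :
    fracIntegral a (fun s ↦ ∑' k, d k * (s ^ (b k - 1) / Gamma (b k))) T
      = ∑' k, d k * (T ^ (a + b k - 1) / Gamma (a + b k)) := by
  have hGa : Gamma a ≠ 0 := (Gamma_pos_of_pos ha).ne'
  set F : ℕ → ℝ → ℝ := fun k s ↦ d k / Gamma (b k) * ((T - s) ^ (a - 1) * s ^ (b k - 1)) with hF
  have integral_beta (c : ℝ) (k : ℕ) :
      ∫ s in Ioc 0 T, c / Gamma (b k) * ((T - s) ^ (a - 1) * s ^ (b k - 1))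
        = Gamma a * (c * (T ^ (a + b k - 1) / Gamma (a + b k))) := by
    have hGb := Gamma_pos_of_pos (hb k)
    rw [integral_const_mul, ← intervalIntegral.integral_of_le hT.le,
      integral_sub_rpow_mul_rpow ha (hb k) hT]
    field_simp
  have hint (k : ℕ) : IntegrableOn (F k) (Ioc 0 T) :=
    (intervalIntegrable_sub_rpow_mul_rpow ha (hb k) hT).1.const_mul _
  have hnorm (k : ℕ) : ∫ s in Ioc 0 T, ‖F k s‖
      = Gamma a * (|d k| * (T ^ (a + b k - 1) / Gamma (a + b k))) := by
    rw [← integral_beta]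
    refine setIntegral_congr_fun measurableSet_Ioc fun s hs ↦ ?_
    have hbeta : 0 ≤ (T - s) ^ (a - 1) * s ^ (b k - 1) :=
      mul_nonneg (rpow_nonneg (sub_nonneg.2 hs.2) _) (rpow_nonneg hs.1.le _)
    simp only [hF, norm_mul, norm_div, norm_of_nonneg hbeta,
      norm_of_nonneg (Gamma_pos_of_pos (hb k)).le, norm_eq_abs]
  have hfubini := integral_tsum_of_summable_integral_norm hint
    (by simpa only [hnorm] using hsum.mul_left (Gamma a))
  simp only [hF, integral_beta] at hfubini
  rw [fracIntegral, inv_mul_eq_iff_eq_mul₀ hGa, ← tsum_mul_left, hfubini,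
    intervalIntegral.integral_of_le hT.le]
  simp only [← tsum_mul_left]
  congr! 4
  ring

end FracIntegral

section MaximumPrinciple

variable {a T : ℝ} {φ φ' : ℝ → ℝ}

lemma continuousWithinAt_sub_rpow_mul_sub (ha : 0 < a) (hφ : DifferentiableAt ℝ φ T) :
    ContinuousWithinAt (fun s ↦ (T - s) ^ (a - 1) * (φ s - φ T)) (Iic T) T := by
  have hcont : ContinuousAt (fun s ↦ -(T - s) ^ a * dslope φ T s) T :=
    ((by fun_prop : ContinuousAt (fun s ↦ T - s) T).rpow_const (Or.inr ha.le)).neg.mul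
      (continuousAt_dslope_same.2 hφ)
  have heq : EqOn (fun s ↦ (T - s) ^ (a - 1) * (φ s - φ T))
      (fun s ↦ -(T - s) ^ a * dslope φ T s) (Iic T) := by
    intro s hs
    rcases eq_or_lt_of_le (mem_Iic.1 hs) with rfl | hlt
    · simp [zero_rpow ha.ne']
    · simp only [← sub_smul_dslope φ T s, rpow_sub_one (sub_pos.2 hlt).ne', smul_eq_mul]
      field_simp [(sub_pos.2 hlt).ne']
      ring
  exact hcont.continuousWithinAt.congr heq (heq self_mem_Iic)

lemma hasDerivAt_sub_rpow_mul_sub (a : ℝ) {s d : ℝ} (hs : s < T) (hφ : HasDerivAt φ d s) :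
    HasDerivAt (fun s ↦ (T - s) ^ (a - 1) * (φ s - φ T))
      ((1 - a) * (T - s) ^ (a - 2) * (φ s - φ T) + (T - s) ^ (a - 1) * d) s := by
  have hw := ((hasDerivAt_id s).const_sub T).rpow_const (p := a - 1) (Or.inl (sub_pos.2 hs).ne')
  convert! hw.mul (hφ.sub_const (φ T)) using 1
  simp only [id, show a - 1 - 1 = a - 2 by ring]
  ring

/- With `w(s) = (T - s) ^ (a - 1)`, integrate `(w (φ - φ T))' = w' (φ - φ T) + w φ'`: the boundary
term at `T` vanishes, and `w' (φ - φ T) ≤ 0` because `w` increases. -/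
lemma fracIntegral_deriv_nonneg_of_isMaxOn (ha : 0 < a) (ha1 : a ≤ 1) (hT : 0 < T)
    (hcont : ContinuousOn φ (Icc 0 T)) (hderiv : ∀ s ∈ Ioc 0 T, HasDerivAt φ (φ' s) s)
    (hmax : IsMaxOn φ (Icc 0 T) T)
    (hint : IntervalIntegrable (fun s ↦ (T - s) ^ (a - 1) * φ' s) volume 0 T) :
    0 ≤ fracIntegral a φ' T := by
  have hbdry : ContinuousOn (fun s ↦ (T - s) ^ (a - 1) * (φ s - φ T)) (Icc 0 T) := by
    intro s hs
    rcases eq_or_lt_of_le hs.2 with rfl | hlt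
    · exact (continuousWithinAt_sub_rpow_mul_sub ha
        (hderiv s ⟨hT, le_rfl⟩).differentiableAt).mono Icc_subset_Iic_self
    · have hw : ContinuousAt (fun s ↦ (T - s) ^ (a - 1)) s :=
        ContinuousAt.rpow_const (by fun_prop) (Or.inl (sub_pos.2 hlt).ne')
      exact hw.continuousWithinAt.mul ((hcont s hs).sub continuousWithinAt_const)
  have hle : (T - T) ^ (a - 1) * (φ T - φ T) - (T - 0) ^ (a - 1) * (φ 0 - φ T)
      ≤ ∫ s in (0 : ℝ)..T, (T - s) ^ (a - 1) * φ' s := by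
    refine intervalIntegral.sub_le_integral_of_hasDeriv_right_of_le hT.le hbdry
      (fun s hs ↦ (hasDerivAt_sub_rpow_mul_sub a hs.2
        (hderiv s ⟨hs.1, hs.2.le⟩)).hasDerivWithinAt)
      ((integrableOn_Icc_iff_integrableOn_Ioc).2 hint.1) fun s hs ↦ ?_
    have hw' : 0 ≤ (1 - a) * (T - s) ^ (a - 2) :=
      mul_nonneg (sub_nonneg.2 ha1) (rpow_nonneg (sub_pos.2 hs.2).le _)
    have hφ : φ s - φ T ≤ 0 := sub_nonpos.2 (hmax ⟨hs.1.le, hs.2.le⟩)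
    linarith [mul_nonpos_of_nonneg_of_nonpos hw' hφ]
  have hstart : (T - 0) ^ (a - 1) * (φ 0 - φ T) ≤ 0 :=
    mul_nonpos_of_nonneg_of_nonpos (rpow_nonneg (by linarith) _)
      (sub_nonpos.2 (hmax ⟨le_rfl, hT.le⟩))
  refine mul_nonneg (inv_nonneg.2 (Gamma_pos_of_pos ha).le) ?_
  rw [sub_self (φ T), mul_zero] at hle
  linarith

lemma le_max_of_fracIntegral_deriv_eq_mul {c : ℝ} (ha : 0 < a) (ha1 : a ≤ 1) (hc : c < 0)
    (hT : 0 ≤ T) (hcont : ContinuousOn φ (Icc 0 T))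
    (hderiv : ∀ s ∈ Ioc 0 T, HasDerivAt φ (φ' s) s)
    (hint : ∀ t ∈ Ioc 0 T, IntervalIntegrable (fun s ↦ (t - s) ^ (a - 1) * φ' s) volume 0 t)
    (heq : ∀ t ∈ Ioc 0 T, fracIntegral a φ' t = c * φ t) :
    φ T ≤ max (φ 0) 0 := by
  by_contra! hlt
  obtain ⟨τ, hτ, hmax⟩ := isCompact_Icc.exists_isMaxOn (nonempty_Icc.2 hT) hcont
  obtain ⟨hφ0, hφpos⟩ := max_lt_iff.1 (hlt.trans_le (hmax (right_mem_Icc.2 hT)))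
  have hτ0 : 0 < τ := hτ.1.lt_of_ne fun h ↦ hφ0.ne (congrArg φ h)
  have hsub : Icc 0 τ ⊆ Icc 0 T := Icc_subset_Icc_right hτ.2
  have hnonneg := fracIntegral_deriv_nonneg_of_isMaxOn ha ha1 hτ0 (hcont.mono hsub)
    (fun s hs ↦ hderiv s ⟨hs.1, hs.2.trans hτ.2⟩) (hmax.on_subset hsub) (hint τ ⟨hτ0, hτ.2⟩)
  rw [heq τ ⟨hτ0, hτ.2⟩] at hnonneg
  exact hnonneg.not_gt (mul_neg_of_neg_of_pos hc hφpos)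

end MaximumPrinciple

section MittagLeffler

/-- The two-parameter Mittag-Leffler function `E_{α,β}`. -/
noncomputable def mittagLeffler₂ (α β x : ℝ) : ℝ := ∑' k : ℕ, x ^ k / Gamma (α * k + β)

/-- The function `F_β(t) = t ^ (β - 1) * E_{α,β}(c * t ^ α)`. For fixed `α` and `c`, fractional
integration of order `a` shifts `β` to `a + β`. -/
noncomputable def mittagLefflerKernel (α β c t : ℝ) : ℝ :=
  t ^ (β - 1) * mittagLeffler₂ α β (c * t ^ α)

variable {α β a c t : ℝ}

lemma summable_pow_div_Gamma (hα : 0 < α) (β x : ℝ) :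
    Summable fun k : ℕ ↦ x ^ k / Gamma (α * k + β) := by
  set M : ℝ := (|x| + 1) ^ α⁻¹
  have hM : 0 < M := by positivity
  have hMα : M ^ α = |x| + 1 := rpow_inv_rpow (by positivity) hα.ne'
  have hgeom : Summable fun k : ℕ ↦ exp M * M ^ (1 - β) * (|x| / (|x| + 1)) ^ k :=
    (summable_geometric_of_lt_one (by positivity)
      ((div_lt_one (by positivity)).2 (lt_add_one _))).mul_left _
  have hlarge : ∀ᶠ k : ℕ in atTop, 1 ≤ α * k + β :=
    (tendsto_atTop_add_const_right _ β
      (tendsto_natCast_atTop_atTop.const_mul_atTop hα)).eventually_ge_atTop 1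
  refine hgeom.of_norm_bounded_eventually_nat ?_
  filter_upwards [hlarge] with k hk
  have hGamma := Gamma_pos_of_pos (zero_lt_one.trans_le hk)
  have hlower : (|x| + 1) ^ k * (M ^ (β - 1) * exp (-M)) ≤ Gamma (α * k + β) := by
    refine le_of_eq_of_le ?_ (rpow_mul_exp_neg_le_Gamma hk hM.le)
    rw [add_sub_assoc, rpow_add hM, rpow_mul hM.le, hMα, rpow_natCast, mul_assoc]
  calc ‖x ^ k / Gamma (α * k + β)‖ = |x| ^ k / Gamma (α * k + β) := by
        rw [norm_div, norm_pow, norm_eq_abs, norm_of_nonneg hGamma.le]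
    _ ≤ |x| ^ k / ((|x| + 1) ^ k * (M ^ (β - 1) * exp (-M))) := by gcongr
    _ = exp M * M ^ (1 - β) * (|x| / (|x| + 1)) ^ k := by
        rw [exp_neg, ← neg_sub β 1, rpow_neg hM.le, div_pow]
        field_simp

lemma continuous_mittagLeffler₂ (hα : 0 < α) (β : ℝ) : Continuous (mittagLeffler₂ α β) := by
  refine continuous_iff_continuousAt.2 fun x ↦ ?_
  have hball : Metric.closedBall 0 (|x| + 1) ∈ 𝓝 x :=
    Metric.closedBall_mem_nhds_of_mem (by simp)
  refine ContinuousOn.continuousAt (continuousOn_tsum (fun k ↦ by fun_prop)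
    (summable_pow_div_Gamma hα β (|x| + 1)).norm fun k y hy ↦ ?_) hball
  have hy' : ‖y‖ ≤ ‖|x| + 1‖ := (mem_closedBall_zero_iff.1 hy).trans (le_abs_self _)
  simp only [norm_div, norm_pow]
  gcongr

lemma continuous_mittagLeffler₂_mul_rpow (hα : 0 < α) (β c : ℝ) :
    Continuous fun t : ℝ ↦ mittagLeffler₂ α β (c * t ^ α) :=
  (continuous_mittagLeffler₂ hα β).comp ((continuous_rpow_const hα.le).const_mul c)

lemma mittagLeffler₂_eq_inv_Gamma_add (hα : 0 < α) (β x : ℝ) :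
    mittagLeffler₂ α β x = (Gamma β)⁻¹ + x * mittagLeffler₂ α (α + β) x := by
  rw [mittagLeffler₂, (summable_pow_div_Gamma hα β x).tsum_eq_zero_add, mittagLeffler₂,
    ← tsum_mul_left]
  congr 1
  · simp
  · congr! 2 with k
    rw [pow_succ', mul_div_assoc]
    push_cast
    ring_nf

lemma mittagLeffler_zero (α : ℝ) : mittagLeffler α 0 = 1 := by
  rw [mittagLeffler, tsum_eq_single 0 fun k hk ↦ by simp [hk]]
  simp

lemma mittagLefflerKernel_one (α c t : ℝ) :
    mittagLefflerKernel α 1 c t = mittagLeffler α (c * t ^ α) := by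
  simp [mittagLefflerKernel, mittagLeffler₂, mittagLeffler]

lemma continuous_mittagLefflerKernel_one (hα : 0 < α) (c : ℝ) :
    Continuous (mittagLefflerKernel α 1 c) := by
  refine (continuous_mittagLeffler₂_mul_rpow hα 1 c).congr fun t ↦ ?_
  rw [mittagLefflerKernel, sub_self, rpow_zero, one_mul]

lemma continuousOn_mittagLefflerKernel (hα : 0 < α) (β c : ℝ) :
    ContinuousOn (mittagLefflerKernel α β c) (Ioi 0) := by
  refine ContinuousOn.mul (fun t ht ↦ ?_)
    (continuous_mittagLeffler₂_mul_rpow hα β c).continuousOn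
  exact (continuousAt_rpow_const t _ (Or.inl (ne_of_gt ht))).continuousWithinAt

lemma intervalIntegrable_sub_rpow_mul_mittagLefflerKernel (hα : 0 < α) (ha : 0 < a) (hβ : 0 < β)
    (c : ℝ) (ht : 0 < t) :
    IntervalIntegrable (fun s ↦ (t - s) ^ (a - 1) * mittagLefflerKernel α β c s) volume 0 t := by
  simpa only [mittagLefflerKernel, mul_assoc] using
    (intervalIntegrable_sub_rpow_mul_rpow ha hβ ht).mul_continuousOn
      (continuous_mittagLeffler₂_mul_rpow hα β c).continuousOn

lemma mittagLefflerKernel_term (α β c : ℝ) (ht : 0 < t) (k : ℕ) :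
    t ^ (β - 1) * ((c * t ^ α) ^ k / Gamma (α * k + β))
      = c ^ k * (t ^ (α * k + β - 1) / Gamma (α * k + β)) := by
  rw [add_sub_assoc, rpow_add ht, rpow_mul ht.le, rpow_natCast, mul_pow]
  ring

lemma mittagLefflerKernel_eq_tsum (α β c : ℝ) (ht : 0 < t) :
    mittagLefflerKernel α β c t
      = ∑' k : ℕ, c ^ k * (t ^ (α * k + β - 1) / Gamma (α * k + β)) := by
  simp only [mittagLefflerKernel, mittagLeffler₂, ← tsum_mul_left,
    mittagLefflerKernel_term _ _ _ ht]

lemma mittagLefflerKernel_eq_rpow_div_Gamma_add (hα : 0 < α) (β c : ℝ) (ht : 0 < t) :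
    mittagLefflerKernel α β c t
      = t ^ (β - 1) / Gamma β + c * mittagLefflerKernel α (α + β) c t := by
  rw [mittagLefflerKernel, mittagLeffler₂_eq_inv_Gamma_add hα, mittagLefflerKernel,
    add_sub_assoc α, rpow_add ht]
  ring

lemma fracIntegral_mittagLefflerKernel (hα : 0 < α) (ha : 0 < a) (hβ : 0 < β) (c : ℝ)
    (ht : 0 < t) :
    fracIntegral a (mittagLefflerKernel α β c) t = mittagLefflerKernel α (a + β) c t := by
  have hsum : Summable fun k : ℕ ↦
      |c ^ k| * (t ^ (a + (α * k + β) - 1) / Gamma (a + (α * k + β))) := by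
    refine ((summable_pow_div_Gamma hα (a + β) (|c| * t ^ α)).mul_left
      (t ^ (a + β - 1))).congr fun k ↦ ?_
    rw [mittagLefflerKernel_term _ _ _ ht, abs_pow, add_left_comm a]
  rw [fracIntegral_congr ht.le fun s hs ↦ mittagLefflerKernel_eq_tsum α β c hs.1,
    fracIntegral_tsum ha (fun k ↦ by positivity) ht hsum, mittagLefflerKernel_eq_tsum _ _ _ ht]
  simp only [add_left_comm a]

lemma hasDerivAt_mittagLefflerKernel_one_add (hα : 0 < α) (hβ : 0 < β) (c : ℝ) (ht : 0 < t) :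
    HasDerivAt (mittagLefflerKernel α (1 + β) c) (mittagLefflerKernel α β c t) t := by
  have hprim : mittagLefflerKernel α (1 + β) c
      =ᶠ[𝓝 t] fun u ↦ ∫ s in (0 : ℝ)..u, mittagLefflerKernel α β c s := by
    filter_upwards [Ioi_mem_nhds ht] with u hu
    rw [← fracIntegral_mittagLefflerKernel hα one_pos hβ c hu, fracIntegral_one]
  have hint : IntervalIntegrable (mittagLefflerKernel α β c) volume 0 t := by
    simpa using intervalIntegrable_sub_rpow_mul_mittagLefflerKernel hα one_pos hβ c ht
  have hcont := continuousOn_mittagLefflerKernel hα β c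
  exact (intervalIntegral.integral_hasDerivAt_right hint
    (hcont.stronglyMeasurableAtFilter isOpen_Ioi t ht)
    (hcont.continuousAt (Ioi_mem_nhds ht))).congr_of_eventuallyEq hprim

lemma hasDerivAt_mittagLefflerKernel_one (hα : 0 < α) (c : ℝ) (ht : 0 < t) :
    HasDerivAt (mittagLefflerKernel α 1 c) (c * mittagLefflerKernel α α c t) t := by
  have hvolterra : mittagLefflerKernel α 1 c
      =ᶠ[𝓝 t] fun u ↦ 1 + c * mittagLefflerKernel α (1 + α) c u := by
    filter_upwards [Ioi_mem_nhds ht] with u hu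
    simpa [add_comm] using mittagLefflerKernel_eq_rpow_div_Gamma_add hα 1 c hu
  exact (((hasDerivAt_mittagLefflerKernel_one_add hα hα c ht).const_mul c).const_add
    1).congr_of_eventuallyEq hvolterra

lemma mul_mittagLeffler_le_max (hα : α ∈ Ioo 0 1) {x : ℝ} (hx : x < 0) (σ : ℝ) :
    σ * mittagLeffler α x ≤ max σ 0 := by
  have hα' : 0 < 1 - α := sub_pos.2 hα.2
  have hcaputo (t : ℝ) (ht : t ∈ Ioc 0 1) :
      fracIntegral (1 - α) (fun s ↦ σ * (x * mittagLefflerKernel α α x s)) t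
        = x * (σ * mittagLefflerKernel α 1 x t) := by
    rw [fracIntegral_const_mul, fracIntegral_const_mul,
      fracIntegral_mittagLefflerKernel hα.1 hα' hα.1 x ht.1, sub_add_cancel, mul_left_comm]
  have hint (t : ℝ) (ht : t ∈ Ioc 0 1) : IntervalIntegrable
      (fun s ↦ (t - s) ^ (1 - α - 1) * (σ * (x * mittagLefflerKernel α α x s))) volume 0 t := by
    convert! (intervalIntegrable_sub_rpow_mul_mittagLefflerKernel hα.1 hα' hα.1 x
      ht.1).const_mul (σ * x) using 2
    ring
  simpa [mittagLefflerKernel_one, zero_rpow hα.1.ne', mittagLeffler_zero] using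
    le_max_of_fracIntegral_deriv_eq_mul hα' (by linarith [hα.1]) hx zero_le_one
      ((continuous_mittagLefflerKernel_one hα.1 x).const_mul σ).continuousOn
      (fun s hs ↦ (hasDerivAt_mittagLefflerKernel_one hα.1 x hs.1).const_mul σ) hint hcaputo

lemma mittagLeffler_mem_Icc_of_nonpos (hα : α ∈ Ioo 0 1) {x : ℝ} (hx : x ≤ 0) :
    mittagLeffler α x ∈ Icc 0 1 := by
  rcases hx.eq_or_lt with rfl | hneg
  · simp [mittagLeffler_zero]
  · have hnonneg := mul_mittagLeffler_le_max hα hneg (-1)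
    have hle_one := mul_mittagLeffler_le_max hα hneg 1
    norm_num at hnonneg hle_one
    exact ⟨hnonneg, hle_one⟩

end MittagLeffler

section Laplace

variable {α β a c lam : ℝ}

lemma integral_exp_neg_mul_rpow_div_Gamma (ha : 0 < a) (hlam : 0 < lam) :
    ∫ t in Ioi 0, exp (-(lam * t)) * (t ^ (a - 1) / Gamma a) = lam ^ (-a) := by
  have hGamma := (Gamma_pos_of_pos ha).ne'
  calc ∫ t in Ioi 0, exp (-(lam * t)) * (t ^ (a - 1) / Gamma a)
      = (∫ t in Ioi 0, t ^ (a - 1) * exp (-(lam * t))) / Gamma a := by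
        rw [← integral_div]
        congr! 2
        ring
    _ = lam ^ (-a) := by
        rw [integral_rpow_mul_exp_neg_mul_Ioi ha hlam, mul_div_cancel_right₀ _ hGamma,
          one_div, inv_rpow hlam.le, rpow_neg hlam.le]

lemma integrableOn_exp_neg_mul_rpow_div_Gamma (ha : 0 < a) (hlam : 0 < lam) :
    IntegrableOn (fun t ↦ exp (-(lam * t)) * (t ^ (a - 1) / Gamma a)) (Ioi 0) := by
  refine not_imp_comm.1 integral_undef ?_
  rw [integral_exp_neg_mul_rpow_div_Gamma ha hlam]
  positivity

lemma integral_exp_neg_mul_fracIntegral {g : ℝ → ℝ} (ha : 0 < a) (hlam : 0 < lam)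
    (hg : IntegrableOn (fun t ↦ exp (-(lam * t)) * g t) (Ioi 0)) :
    ∫ t in Ioi 0, exp (-(lam * t)) * fracIntegral a g t
      = lam ^ (-a) * ∫ t in Ioi 0, exp (-(lam * t)) * g t := by
  have hconv := integral_posConvolution hg
    (integrableOn_exp_neg_mul_rpow_div_Gamma ha hlam) (ContinuousLinearMap.mul ℝ ℝ)
  simp only [ContinuousLinearMap.mul_apply', integral_exp_neg_mul_rpow_div_Gamma ha hlam] at hconv
  rw [mul_comm, ← hconv]
  refine integral_congr_ae (Eventually.of_forall fun t ↦ ?_)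
  simp only [fracIntegral, ← intervalIntegral.integral_const_mul]
  refine intervalIntegral.integral_congr fun s _ ↦ ?_
  have hexp : exp (-(lam * t)) = exp (-(lam * s)) * exp (-(lam * (t - s))) := by
    rw [← exp_add]
    ring_nf
  simp only [hexp]
  ring

lemma mul_integral_exp_neg_mul_mittagLefflerKernel (hα : 0 < α) (hβ : 0 < β) (hlam : 0 < lam)
    (hint : IntegrableOn (fun t ↦ exp (-(lam * t)) * mittagLefflerKernel α β c t) (Ioi 0)) :
    (lam ^ α - c) * ∫ t in Ioi 0, exp (-(lam * t)) * mittagLefflerKernel α β c t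
      = lam ^ (α - β) := by
  set L := ∫ t in Ioi 0, exp (-(lam * t)) * mittagLefflerKernel α β c t with hL
  have hvolterra : L - lam ^ (-β) = c * (lam ^ (-α) * L) := by
    rw [← integral_exp_neg_mul_fracIntegral hα hlam hint, ← integral_const_mul,
      ← integral_exp_neg_mul_rpow_div_Gamma hβ hlam, hL,
      ← integral_sub hint (integrableOn_exp_neg_mul_rpow_div_Gamma hβ hlam)]
    refine setIntegral_congr_fun measurableSet_Ioi fun t ht ↦ ?_
    simp only [fracIntegral_mittagLefflerKernel hα hα hβ c ht]
    rw [mittagLefflerKernel_eq_rpow_div_Gamma_add hα β c ht]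
    ring
  have hcancel : lam ^ α * lam ^ (-α) = 1 := by rw [← rpow_add hlam, add_neg_cancel, rpow_zero]
  rw [sub_eq_add_neg α, rpow_add hlam]
  linear_combination lam ^ α * hvolterra + c * L * hcancel

lemma integrableOn_exp_neg_mul_mittagLefflerKernel_one (hα : α ∈ Ioo 0 1) (hc : c ≤ 0)
    (hlam : 0 < lam) :
    IntegrableOn (fun t ↦ exp (-(lam * t)) * mittagLefflerKernel α 1 c t) (Ioi 0) := by
  have hexp : IntegrableOn (fun t ↦ exp (-(lam * t))) (Ioi 0) := by
    simpa using integrableOn_exp_neg_mul_rpow_div_Gamma one_pos hlam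
  refine hexp.mul_bdd (c := 1)
    (continuous_mittagLefflerKernel_one hα.1 c).aestronglyMeasurable ?_
  filter_upwards [ae_restrict_mem measurableSet_Ioi] with t ht
  obtain ⟨hnonneg, hle_one⟩ := mittagLeffler_mem_Icc_of_nonpos hα
    (mul_nonpos_of_nonpos_of_nonneg hc (rpow_nonneg (le_of_lt ht) α))
  rwa [mittagLefflerKernel_one, norm_of_nonneg hnonneg]

end Laplace

/-- Laplace transform of t ↦ E_α(-ξ t^α): equals λ^{α-1}/(λ^α + ξ). -/
theorem stmt_5 (α ξ : ℝ) (hα : α ∈ Set.Ioo (0:ℝ) 1) (hξ : 0 < ξ) :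
    ∀ lam : ℝ, 0 < lam →
      ∫ t in Ioi (0:ℝ), Real.exp (-(lam * t)) * mittagLeffler α (-(ξ * t ^ α))
        = lam ^ (α - 1) / (lam ^ α + ξ) := by
  intro lam hlam
  have hlaplace := mul_integral_exp_neg_mul_mittagLefflerKernel hα.1 one_pos hlam
    (integrableOn_exp_neg_mul_mittagLefflerKernel_one hα (neg_nonpos.2 hξ.le) hlam)
  simp only [mittagLefflerKernel_one, sub_neg_eq_add, neg_mul] at hlaplace
  rw [eq_div_iff (by positivity), mul_comm, hlaplace]
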